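/- arXiv:math/0310460 — 8 statements merged into one kernel-verified Lean document; each statement's English description precedes it below -/
import Mathlib

section
/- Let m ≥ 10 and define Q(n_1,…,n_{m−1}) = m·Σ_{i=1}^{m−1} n_i² − (Σ_{i=1}^{m−1} n_i)² for n ∈ ℤ^{m−1}. Then the number of lattice points n ∈ ℤ^{m−1} with Q(n) ≤ 2m equals 2m² + 1. (Equivalently, N_{Σ_HL^m}(2) = 2m² + 1 for m ≥ 10, where N_Σ counts with multiplicity the homogeneities α ∈ [0,2] of homogeneous harmonic functions on the Harvey–Lawson cone.) -/
/-!
Put `m = k + 1`. The form `Q` on `ℤ^k` is the form `(k+1) ∑ y_i² − (∑ y_i)²` on `ℤ^(k+1)`, which is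
invariant under adding a constant vector, read on the quotient by the constant vectors through the
map `dehom y = (y_{i+1} − y_0)_i`.

Among the representatives of a class there is one with `|∑ y_i| ≤ m / 2`. If `N = ∑ y_i²` and
`r = ∑ y_i`, then `|r| ≤ N` by integrality, and `m N − r² ≤ 2 m` then forces `|r| ≤ 4`, hence
`N ≤ 3`, hence `r² ≤ 9 < m` and `N ≤ 2`; this is where `m ≥ 10` is used. Conversely `N ≤ 2` gives
`Q ≤ 2 m`, and two vectors with `N ≤ 2` which differ by a constant vector `(d, …, d)` satisfy
`m d² ≤ 8`, so are equal. Thus the required number is that of the vectors of `ℤ^m` with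
`∑ y_i² ≤ 2`. These are `0`, `± e_i`, `± e_i ± e_j`, and `shortVec` lists them without repetition by
`Option (Fin m × Fin m × Bool)`, a type with `2 m² + 1` elements.
-/

/-- The coordinates `y_{i+1} − y_0` of the class of `y` modulo constant vectors. -/
def dehom {k : ℕ} (y : Fin (k + 1) → ℤ) : Fin k → ℤ := fun i => y i.succ - y 0

/-- The vectors of `ℤ^m` of squared length at most `2`: `none` gives `0`, and `(i, j, b)` gives, up to
the sign recorded by `b`, `e_i` if `i = j`, `e_i + e_j` if `i < j`, and `e_i − e_j` if `j < i`. -/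
def shortVec {m : ℕ} : Option (Fin m × Fin m × Bool) → Fin m → ℤ
  | none => fun _ => 0
  | some (i, j, b) => fun l =>
      (if b then 1 else -1) * ((if l = i then 1 else 0) +
        (if l = j then (if i < j then 1 else if j < i then -1 else 0) else 0))

lemma dehom_form {k : ℕ} (y : Fin (k + 1) → ℤ) :
    ((k : ℤ) + 1) * ∑ i, dehom y i ^ 2 - (∑ i, dehom y i) ^ 2
      = ((k : ℤ) + 1) * ∑ i, y i ^ 2 - (∑ i, y i) ^ 2 := by
  have h1 : ∑ i, dehom y i = ∑ i : Fin k, y i.succ - k * y 0 := by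
    simp [dehom, Finset.sum_sub_distrib]
  have h2 : ∑ i, dehom y i ^ 2
      = ∑ i : Fin k, y i.succ ^ 2 - 2 * y 0 * ∑ i : Fin k, y i.succ + k * y 0 ^ 2 := by
    simp only [dehom, sub_sq, Finset.sum_add_distrib, Finset.sum_sub_distrib, Finset.mul_sum]
    simp only [Finset.sum_const, Finset.card_univ, Fintype.card_fin, nsmul_eq_mul]
    congr 2
    exact Finset.sum_congr rfl fun i _ => by ring
  rw [h1, h2, Fin.sum_univ_succ, Fin.sum_univ_succ]
  ring

lemma abs_sum_le_sum_sq {m : ℕ} (y : Fin m → ℤ) : |∑ i, y i| ≤ ∑ i, y i ^ 2 := by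
  refine (Finset.abs_sum_le_sum_abs _ _).trans (Finset.sum_le_sum fun i _ => ?_)
  rw [← sq_abs]
  exact Int.le_self_sq _

lemma exists_balanced (m S : ℤ) (hm : 0 < m) : ∃ c, 2 * |S - m * c| ≤ m := by
  refine ⟨(2 * S + m) / (2 * m), ?_⟩
  have h1 := Int.mul_ediv_add_emod (2 * S + m) (2 * m)
  have h2 := Int.emod_nonneg (2 * S + m) (b := 2 * m) (by omega)
  have h3 := Int.emod_lt_of_pos (2 * S + m) (b := 2 * m) (by omega)
  have : |2 * (S - m * ((2 * S + m) / (2 * m)))| ≤ m := by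
    rw [abs_le]; constructor <;> linarith
  rwa [abs_mul, abs_two] at this

/-- The two-step descent `|r| ≤ 4`, `N ≤ 3`, `N ≤ 2`. -/
lemma normSq_le_two (m N r : ℤ) (hm : 10 ≤ m) (hr : 2 * |r| ≤ m) (hN : |r| ≤ N)
    (h : m * N - r ^ 2 ≤ 2 * m) : N ≤ 2 := by
  rw [← sq_abs] at h
  have h0 := abs_nonneg r
  generalize |r| = s at *
  have hs : s ≤ 4 := by nlinarith
  have hN3 : N ≤ 3 := by nlinarith
  nlinarith

lemma dehom_injOn {k : ℕ} (hk : 10 ≤ k + 1) :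
    Set.InjOn dehom {y : Fin (k + 1) → ℤ | ∑ i, y i ^ 2 ≤ 2} := by
  intro y hy z hz h
  simp only [Set.mem_ofPred_eq] at hy hz
  have hd : ∀ i, y i - z i = y 0 - z 0 := by
    intro i
    refine Fin.cases rfl (fun i => ?_) i
    have := congrFun h i
    simp only [dehom] at this
    linarith
  have h1 : ∑ i, (y i - z i) ^ 2 ≤ ∑ i, (2 * y i ^ 2 + 2 * z i ^ 2) :=
    Finset.sum_le_sum fun i _ => by nlinarith [sq_nonneg (y i + z i)]
  simp only [hd, Finset.sum_add_distrib, ← Finset.mul_sum, Finset.sum_const, Finset.card_univ,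
    Fintype.card_fin, nsmul_eq_mul] at h1
  have hk' : (10 : ℤ) ≤ ((k + 1 : ℕ) : ℤ) := by exact_mod_cast hk
  have h2 : y 0 - z 0 = 0 := by
    by_contra hne
    have : 1 ≤ (y 0 - z 0) ^ 2 := by
      have := pow_pos (abs_pos.mpr hne) 2
      rw [sq_abs] at this
      omega
    nlinarith
  funext i
  linarith [hd i]

lemma image_dehom {k : ℕ} (hk : 10 ≤ k + 1) :
    {n : Fin k → ℤ | ((k : ℤ) + 1) * ∑ i, n i ^ 2 - (∑ i, n i) ^ 2 ≤ 2 * ((k : ℤ) + 1)}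
      = dehom '' {y : Fin (k + 1) → ℤ | ∑ i, y i ^ 2 ≤ 2} := by
  have hk' : (10 : ℤ) ≤ (k : ℤ) + 1 := by exact_mod_cast hk
  ext n
  simp only [Set.mem_ofPred_eq, Set.mem_image]
  constructor
  · intro h
    obtain ⟨c, hc⟩ := exists_balanced ((k : ℤ) + 1) (∑ i, n i) (by omega)
    let y : Fin (k + 1) → ℤ := Fin.cons (-c) fun i => n i - c
    have hy : dehom y = n := by
      funext i
      simp [dehom, y]
    have hsum : ∑ i, y i = ∑ i, n i - ((k : ℤ) + 1) * c := by
      rw [Fin.sum_univ_succ]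
      simp only [y, Fin.cons_zero, Fin.cons_succ, Finset.sum_sub_distrib, Finset.sum_const,
        Finset.card_univ, Fintype.card_fin, nsmul_eq_mul]
      ring
    refine ⟨y, ?_, hy⟩
    rw [← hy, dehom_form] at h
    exact normSq_le_two _ _ _ hk' (hsum ▸ hc) (abs_sum_le_sum_sq y) h
  · rintro ⟨y, hy, rfl⟩
    rw [dehom_form]
    nlinarith [sq_nonneg (∑ i, y i)]

lemma shortVec_injective {m : ℕ} : Function.Injective (shortVec (m := m)) := by
  rintro (_ | ⟨i, j, b⟩) (_ | ⟨i', j', b'⟩) h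
  · rfl
  · have h1 := congrFun h i'
    simp only [shortVec] at h1
    grind
  · have h1 := congrFun h i
    simp only [shortVec] at h1
    grind
  · have h1 := congrFun h i
    have h2 := congrFun h j
    have h3 := congrFun h i'
    have h4 := congrFun h j'
    clear h
    simp only [shortVec] at h1 h2 h3 h4
    cases b <;> cases b' <;> grind

lemma sum_sq_shortVec_le {m : ℕ} (t : Option (Fin m × Fin m × Bool)) :
    ∑ l, shortVec t l ^ 2 ≤ 2 := by
  rcases t with _ | ⟨i, j, b⟩
  · simp [shortVec]
  · calc ∑ l, shortVec (some (i, j, b)) l ^ 2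
        ≤ ∑ l, ((if l = i then 1 else 0) + (if l = j then 1 else 0) : ℤ) := by
          refine Finset.sum_le_sum fun l _ => ?_
          simp only [shortVec]
          cases b <;> split_ifs <;> omega
      _ = 2 := by simp [Finset.sum_add_distrib]

lemma range_shortVec {m : ℕ} :
    Set.range (shortVec (m := m)) = {y : Fin m → ℤ | ∑ i, y i ^ 2 ≤ 2} := by
  ext y
  simp only [Set.mem_range, Set.mem_ofPred_eq]
  constructor
  · rintro ⟨t, rfl⟩
    exact sum_sq_shortVec_le t
  intro hy
  have unit : ∀ i, y i ≠ 0 → y i = 1 ∨ y i = -1 := by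
    intro i hi
    have h1 := Finset.single_le_sum (f := fun i => y i ^ 2) (fun i _ => sq_nonneg (y i))
      (Finset.mem_univ i)
    have h2 : y i < 2 := by nlinarith
    have h3 : -2 < y i := by nlinarith
    omega
  have three : ∀ i j l, i ≠ j → i ≠ l → j ≠ l → y i ≠ 0 → y j ≠ 0 → y l = 0 := by
    intro i j l hij hil hjl hi hj
    by_contra hl
    have h1 := Finset.sum_le_sum_of_subset_of_nonneg (f := fun i => y i ^ 2)
      (Finset.subset_univ ({i, j, l} : Finset (Fin m))) (fun i _ _ => sq_nonneg (y i))
    rw [Finset.sum_insert (by simp [hij, hil]), Finset.sum_insert (by simp [hjl]),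
      Finset.sum_singleton] at h1
    rcases unit i hi with h | h <;> rcases unit j hj with h' | h' <;>
      rcases unit l hl with h'' | h'' <;> rw [h, h', h''] at h1 <;> linarith
  by_cases h0 : ∃ i, y i ≠ 0
  swap
  · push Not at h0
    exact ⟨none, funext fun l => by simp [shortVec, h0]⟩
  obtain ⟨i, hi⟩ := h0
  by_cases h0 : ∃ j, j ≠ i ∧ y j ≠ 0
  swap
  · push Not at h0
    refine ⟨some (i, i, decide (y i = 1)), funext fun l => ?_⟩
    have h1 := unit i hi
    have h2 := h0 l
    simp only [shortVec]
    grind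
  obtain ⟨j, hji, hj⟩ := h0
  -- The two nonzero coordinates may be taken in increasing order.
  wlog hlt : i < j generalizing i j
  · exact this j hj i hji.symm hi (by omega)
  have h3 := fun l a b => three i j l hji.symm a b hi hj
  by_cases he : y i = y j
  · refine ⟨some (i, j, decide (y i = 1)), funext fun l => ?_⟩
    have h1 := unit i hi
    have h2 := h3 l
    simp only [shortVec]
    grind
  · refine ⟨some (j, i, decide (y j = 1)), funext fun l => ?_⟩
    have h1 := unit i hi
    have h1' := unit j hj
    have h2 := h3 l
    simp only [shortVec]
    grind

/-- For `m ≥ 10`, the number of lattice points `n ∈ ℤ^(m-1)` with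
`Q(n) = m ∑ n_i² − (∑ n_i)² ≤ 2m` equals `2m² + 1`; equivalently
`N_{Σ_HL^m}(2) = 2m² + 1` for the link of the Harvey–Lawson cone. -/
theorem hl_count_le (m : ℕ) (hm : 10 ≤ m) :
    {n : Fin (m - 1) → ℤ |
      (m : ℤ) * ∑ i, n i ^ 2 - (∑ i, n i) ^ 2 ≤ 2 * m}.ncard = 2 * m ^ 2 + 1 := by
  obtain ⟨k, rfl⟩ : ∃ k, m = k + 1 := ⟨m - 1, by omega⟩
  simp only [Nat.cast_add, Nat.cast_one]
  -- `k + 1 - 1` is `k` by definition.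
  change {n : Fin k → ℤ |
    ((k : ℤ) + 1) * ∑ i, n i ^ 2 - (∑ i, n i) ^ 2 ≤ 2 * ((k : ℤ) + 1)}.ncard = _
  rw [image_dehom hm, (dehom_injOn hm).ncard_image, ← range_shortVec,
    ← Set.image_univ, Set.ncard_image_of_injective _ shortVec_injective, Set.ncard_univ,
    Nat.card_eq_fintype_card]
  simp only [Fintype.card_option, Fintype.card_prod, Fintype.card_fin, Fintype.card_bool]
  ring
end

section
/- Let m ≥ 10 and define Q(n_1,…,n_{m−1}) = m·Σ_{i=1}^{m−1} n_i² − (Σ_{i=1}^{m−1} n_i)² for n ∈ ℤ^{m−1}. Then the number of lattice points n ∈ ℤ^{m−1} with Q(n) = 2m equals m² − m. (Equivalently, the multiplicity m_{Σ_HL^m}(2) of homogeneous harmonic functions of order 2 on the Harvey–Lawson cone C_HL^m equals m² − m for m ≥ 10.) -/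
/-!
The form `Q` is the form `q(x) = m ∑ xᵢ² − (∑ xᵢ)²` on `ℤ^m`, which is invariant under adding
constants, read on the quotient `ℤ^m / ℤ(1,…,1) ≅ ℤ^(m-1)` via `x ↦ (x_k − x_0)_{k ≥ 1}`
(`form_diff`). Every class has a representative with coordinate sum `s` satisfying `2|s| ≤ m`.
If `q(x) = 2m`, then `∑ xᵢ² = 2 + s²/m`, while `|s| ≤ ∑ xᵢ²` by integrality, so
`|s| (m − |s|) ≤ 2m`. For `m ≥ 10` this forces `|s| ≤ 2`, and then `m ∣ s²` forces `s = 0`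
(`sum_eq_zero_of_form`). An integer vector with sum `0` and square sum `2` is a root
`e_i − e_j` with `i ≠ j` (`eq_root`), and distinct roots lie in distinct classes. Hence the
solutions correspond to the `m² − m` off-diagonal pairs `(i, j)`.
-/

/-- The root vector `e_i - e_j` of type `A`. -/
def rootVec {m : ℕ} (p : Fin m × Fin m) : Fin m → ℤ :=
  Pi.single p.1 1 - Pi.single p.2 1

/-- The coordinates `(x_k - x_0)_{k ≥ 1}` of the class of `x` modulo constant vectors. -/
def diffVec {k : ℕ} (x : Fin (k + 1) → ℤ) : Fin k → ℤ := fun i => x i.succ - x 0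

lemma form_diff {k : ℕ} (x : Fin (k + 1) → ℤ) :
    ((k + 1 : ℕ) : ℤ) * ∑ i, diffVec x i ^ 2 - (∑ i, diffVec x i) ^ 2
      = ((k + 1 : ℕ) : ℤ) * ∑ i, x i ^ 2 - (∑ i, x i) ^ 2 := by
  have h : ∑ i, diffVec x i ^ 2
      = ∑ i : Fin k, x i.succ ^ 2 - 2 * x 0 * ∑ i : Fin k, x i.succ + k * x 0 ^ 2 := by
    simp only [diffVec, sub_sq, Finset.sum_add_distrib, Finset.sum_sub_distrib, Finset.mul_sum]
    simp only [Finset.sum_const, Finset.card_univ, Fintype.card_fin, nsmul_eq_mul]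
    congr 2
    exact Finset.sum_congr rfl fun i _ => by ring
  have h' : ∑ i, diffVec x i = ∑ i : Fin k, x i.succ - k * x 0 := by
    simp [diffVec, Finset.sum_sub_distrib]
  rw [h, h', Fin.sum_univ_succ, Fin.sum_univ_succ]
  push_cast
  ring

lemma sum_rootVec {m : ℕ} (p : Fin m × Fin m) : ∑ i, rootVec p i = 0 := by
  simp [rootVec, Finset.sum_sub_distrib]

lemma sum_mul_rootVec {m : ℕ} (x : Fin m → ℤ) (p : Fin m × Fin m) :
    ∑ i, x i * rootVec p i = x p.1 - x p.2 := by
  simp [rootVec, mul_sub, Finset.sum_sub_distrib, Pi.single_apply]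

lemma sum_rootVec_sq {m : ℕ} {p : Fin m × Fin m} (hp : p.1 ≠ p.2) :
    ∑ i, rootVec p i ^ 2 = 2 := by
  have h := sum_mul_rootVec (rootVec p) p
  simp only [← sq] at h
  rw [h]
  simp [rootVec, hp, hp.symm]

lemma rootVec_inj {m : ℕ} {p q : Fin m × Fin m} (hp : p.1 ≠ p.2)
    (h : rootVec p = rootVec q) : p = q := by
  have h1 := congrFun h p.1
  have h2 := congrFun h p.2
  simp only [rootVec, Pi.sub_apply, Pi.single_apply] at h1 h2
  ext1 <;> grind

/-- With `i`, `j` indices of a positive and a negative coordinate of `x`, the squared distance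
from `x` to `e_i - e_j` is `4 - 2 (x_i - x_j) ≤ 0`. -/
lemma eq_root {m : ℕ} (x : Fin m → ℤ) (h0 : ∑ i, x i = 0) (h2 : ∑ i, x i ^ 2 = 2) :
    ∃ p : Fin m × Fin m, p.1 ≠ p.2 ∧ rootVec p = x := by
  have hne : ∃ i ∈ Finset.univ, x i ≠ 0 := by
    by_contra! hc
    rw [Finset.sum_eq_zero (fun i hi => by simp [hc i hi])] at h2
    omega
  obtain ⟨i, -, hi⟩ := Finset.exists_pos_of_sum_zero_of_exists_nonzero x h0 hne
  obtain ⟨j, -, hj⟩ := Finset.exists_pos_of_sum_zero_of_exists_nonzero (s := Finset.univ)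
    (fun i => -x i) (by simp [h0]) (by simpa using hne)
  have hij : i ≠ j := by rintro rfl; omega
  refine ⟨(i, j), hij, ?_⟩
  have hexp : ∑ l, (rootVec (i, j) l - x l) ^ 2 = 4 - 2 * (x i - x j) := by
    rw [← sum_mul_rootVec x (i, j), Finset.mul_sum]
    have : ∀ l, (rootVec (i, j) l - x l) ^ 2
        = rootVec (i, j) l ^ 2 + x l ^ 2 - 2 * (x l * rootVec (i, j) l) := fun l => by ring
    simp only [this, Finset.sum_sub_distrib, Finset.sum_add_distrib]
    rw [sum_rootVec_sq (p := (i, j)) hij, h2]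
    ring
  have hnn : ∀ l ∈ Finset.univ, 0 ≤ (rootVec (i, j) l - x l) ^ 2 := fun l _ => sq_nonneg _
  have hz : ∑ l, (rootVec (i, j) l - x l) ^ 2 = 0 :=
    le_antisymm (by omega) (Finset.sum_nonneg hnn)
  funext l
  have := (Finset.sum_eq_zero_iff_of_nonneg hnn).1 hz l (Finset.mem_univ l)
  exact sub_eq_zero.1 (pow_eq_zero_iff two_ne_zero |>.1 this)

/-- Here `s` is the coordinate sum and `A` the square sum of an integer vector. -/
lemma sum_eq_zero_of_form {m s A : ℤ} (hm : 10 ≤ m) (h1 : s ≤ A) (h2 : -s ≤ A)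
    (h3 : 2 * s ≤ m) (h4 : -(2 * s) ≤ m) (h : m * A - s ^ 2 = 2 * m) : s = 0 := by
  have hs : s ≤ 2 := by
    by_contra! hc
    nlinarith [mul_nonneg (by omega : 0 ≤ s - 3) (by omega : 0 ≤ m - s - 3)]
  have hs' : -2 ≤ s := by
    by_contra! hc
    nlinarith [mul_nonneg (by omega : 0 ≤ -s - 3) (by omega : 0 ≤ m + s - 3)]
  have hA : A ≤ 2 := by
    by_contra! hc
    nlinarith
  have : s ^ 2 ≤ 0 := by nlinarith
  exact pow_eq_zero_iff two_ne_zero |>.1 (le_antisymm this (sq_nonneg s))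

/-- Every solution is the class of a root. -/
lemma exists_root {k : ℕ} (hk : 10 ≤ k + 1) (n : Fin k → ℤ)
    (hn : ((k + 1 : ℕ) : ℤ) * ∑ i, n i ^ 2 - (∑ i, n i) ^ 2 = 2 * ((k + 1 : ℕ) : ℤ)) :
    ∃ p : Fin (k + 1) × Fin (k + 1), p.1 ≠ p.2 ∧ diffVec (rootVec p) = n := by
  set m : ℤ := ((k + 1 : ℕ) : ℤ) with hmdef
  have hm : 10 ≤ m := by omega
  set S := ∑ i, n i with hS
  -- `t` is `S / m` rounded to the nearest integer
  set t := (2 * S + m) / (2 * m) with ht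
  have e1 := Int.emod_add_mul_ediv (2 * S + m) (2 * m)
  have e2 := Int.emod_nonneg (2 * S + m) (by omega : 2 * m ≠ 0)
  have e3 := Int.emod_lt_of_pos (2 * S + m) (by omega : 0 < 2 * m)
  rw [← ht] at e1
  let x : Fin (k + 1) → ℤ := Fin.cons (-t) (fun i => n i - t)
  have hx : diffVec x = n := by
    funext i
    simp [diffVec, x]
  have hsum : ∑ i, x i = S - m * t := by
    rw [Fin.sum_univ_succ]
    simp only [x, Fin.cons_zero, Fin.cons_succ, Finset.sum_sub_distrib, hmdef]
    simp only [Finset.sum_const, Finset.card_univ, Fintype.card_fin, nsmul_eq_mul]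
    push_cast
    ring
  have hf := form_diff x
  rw [hx, ← hmdef, ← hS, hn] at hf
  have h0 : ∑ i, x i = 0 := by
    refine sum_eq_zero_of_form (A := ∑ i, x i ^ 2) hm ?_ ?_ ?_ ?_ hf.symm
    · exact Finset.sum_le_sum fun i _ => Int.le_self_sq (x i)
    · rw [← Finset.sum_neg_distrib]
      exact Finset.sum_le_sum fun i _ => by simpa using Int.le_self_sq (-x i)
    · rw [hsum]; linarith
    · rw [hsum]; linarith
  have h2 : ∑ i, x i ^ 2 = 2 := by
    rw [h0] at hf
    exact mul_left_cancel₀ (by omega : m ≠ 0) (by linarith)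
  obtain ⟨p, hp, hpx⟩ := eq_root x h0 h2
  exact ⟨p, hp, by rw [hpx, hx]⟩

/-- A vector of coordinate sum `0` is determined by its class modulo constants. -/
lemma eq_of_diffVec_eq {k : ℕ} {x y : Fin (k + 1) → ℤ} (hx : ∑ i, x i = 0)
    (hy : ∑ i, y i = 0) (h : diffVec x = diffVec y) : x = y := by
  have hc : ∀ i, x i - y i = x 0 - y 0 := by
    intro i
    refine Fin.cases rfl (fun j => ?_) i
    have := congrFun h j
    simp only [diffVec] at this
    omega
  have hsum : ∑ i, (x i - y i) = 0 := by rw [Finset.sum_sub_distrib, hx, hy, sub_zero]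
  simp only [hc, Finset.sum_const, Finset.card_univ, Fintype.card_fin, nsmul_eq_mul] at hsum
  have h0 : x 0 - y 0 = 0 := by
    rcases mul_eq_zero.1 hsum with h | h
    · omega
    · exact h
  funext i
  have := hc i
  omega

/-- For `m ≥ 10`, the number of lattice points `n ∈ ℤ^(m-1)` with
`Q(n) = m ∑ n_i² − (∑ n_i)² = 2m` equals `m² − m`; equivalently the multiplicity
`m_{Σ_HL^m}(2)` of homogeneous harmonic functions of order `2` on the Harvey–Lawson
cone is `m² − m` for `m ≥ 10`. -/
theorem hl_count_eq (m : ℕ) (hm : 10 ≤ m) :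
    {n : Fin (m - 1) → ℤ |
      (m : ℤ) * ∑ i, n i ^ 2 - (∑ i, n i) ^ 2 = 2 * m}.ncard = m ^ 2 - m := by
  obtain ⟨k, rfl⟩ : ∃ k, m = k + 1 := ⟨m - 1, by omega⟩
  have himg : {n : Fin k → ℤ | ((k + 1 : ℕ) : ℤ) * ∑ i, n i ^ 2 - (∑ i, n i) ^ 2
      = 2 * ((k + 1 : ℕ) : ℤ)}
      = (fun p => diffVec (rootVec p)) ''
        ((Finset.univ : Finset (Fin (k + 1))).offDiag : Set (Fin (k + 1) × Fin (k + 1))) := by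
    ext n
    simp only [Set.mem_setOf_eq, Set.mem_image, Finset.mem_coe, Finset.mem_offDiag,
      Finset.mem_univ, true_and]
    refine ⟨exists_root hm n, ?_⟩
    rintro ⟨p, hp, rfl⟩
    rw [form_diff, sum_rootVec, sum_rootVec_sq hp]
    ring
  refine (congrArg Set.ncard himg).trans ?_
  rw [Set.ncard_image_of_injOn, Set.ncard_coe_finset, Finset.offDiag_card]
  · simp [sq]
  · intro p hp q _ h
    simp only [Finset.mem_coe, Finset.mem_offDiag, Finset.mem_univ, true_and] at hp
    exact rootVec_inj hp (eq_of_diffVec_eq (sum_rootVec p) (sum_rootVec q) h)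
end

section
/- Define Q(n_1,n_2) = 3(n_1² + n_2²) − (n_1 + n_2)² for (n_1,n_2) ∈ ℤ². Then the number of lattice points (n_1,n_2) ∈ ℤ² with Q(n_1,n_2) ≤ 6 equals 13, and the number with Q(n_1,n_2) = 6 equals 6. (These are the values N_{Σ_HL^3}(2) = 13 and m_{Σ_HL^3}(2) = 6 for the Harvey–Lawson T²-cone C_HL^3 ⊂ ℂ³; together with dim G = 2 and b⁰(Σ) = 1 they give stability index s-ind(C_HL^3) = 13 − 1 − 9 − 6 + 1 + 2 = 0, so C_HL^3 is a stable cone.) -/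
/-! The form `Q(a, b) = 3(a² + b²) - (a + b)² = 2(a² - ab + b²)` is positive definite, so the points
with `Q ≤ 6` are finitely many: completing the square puts them in the box `[-2, 2]²`
(`mem_box_of_form_le_six`), and both counts follow by evaluating `Q` on its 25 points. -/

/-- The form `Q(a, b) = 3(a² + b²) - (a + b)²` satisfies
`2 Q(a, b) = 3 a² + (a - 2 b)² = 3 b² + (b - 2 a)²`, so `Q ≤ 6` confines both coordinates to `[-2, 2]`. -/
lemma mem_box_of_form_le_six {a b : ℤ} (h : 3 * (a ^ 2 + b ^ 2) - (a + b) ^ 2 ≤ 6) :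
    (a, b) ∈ Finset.Icc (-2 : ℤ) 2 ×ˢ Finset.Icc (-2 : ℤ) 2 := by
  have ha : a ^ 2 ≤ 4 := by nlinarith [sq_nonneg (a - 2 * b)]
  have hb : b ^ 2 ≤ 4 := by nlinarith [sq_nonneg (b - 2 * a)]
  simp only [Finset.mem_product, Finset.mem_Icc]
  refine ⟨⟨?_, ?_⟩, ?_, ?_⟩ <;> nlinarith

/-- For the Harvey–Lawson `T²`-cone `C_HL^3 ⊂ ℂ³`: the number of lattice points
`(n₁,n₂) ∈ ℤ²` with `Q(n₁,n₂) = 3(n₁² + n₂²) − (n₁ + n₂)² ≤ 6` equals `13`, and the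
number with `Q(n₁,n₂) = 6` equals `6`. These are `N_{Σ_HL^3}(2) = 13` and
`m_{Σ_HL^3}(2) = 6`, giving stability index `s-ind(C_HL^3) = 0`. -/
theorem hl3_counts :
    {n : ℤ × ℤ | 3 * (n.1 ^ 2 + n.2 ^ 2) - (n.1 + n.2) ^ 2 ≤ 6}.ncard = 13 ∧
    {n : ℤ × ℤ | 3 * (n.1 ^ 2 + n.2 ^ 2) - (n.1 + n.2) ^ 2 = 6}.ncard = 6 := by
  -- Both sets are filtered subsets of the 25-point box, where the count is a finite computation.
  constructor
  · rw [show {n : ℤ × ℤ | 3 * (n.1 ^ 2 + n.2 ^ 2) - (n.1 + n.2) ^ 2 ≤ 6} =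
        ↑((Finset.Icc (-2 : ℤ) 2 ×ˢ Finset.Icc (-2 : ℤ) 2).filter
          fun n : ℤ × ℤ => 3 * (n.1 ^ 2 + n.2 ^ 2) - (n.1 + n.2) ^ 2 ≤ 6) from ?_,
      Set.ncard_coe_finset]
    · decide +kernel
    · ext ⟨a, b⟩
      rw [Finset.mem_coe, Finset.mem_filter]
      exact ⟨fun h => ⟨mem_box_of_form_le_six h, h⟩, fun h => h.2⟩
  · rw [show {n : ℤ × ℤ | 3 * (n.1 ^ 2 + n.2 ^ 2) - (n.1 + n.2) ^ 2 = 6} =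
        ↑((Finset.Icc (-2 : ℤ) 2 ×ˢ Finset.Icc (-2 : ℤ) 2).filter
          fun n : ℤ × ℤ => 3 * (n.1 ^ 2 + n.2 ^ 2) - (n.1 + n.2) ^ 2 = 6) from ?_,
      Set.ncard_coe_finset]
    · decide +kernel
    · ext ⟨a, b⟩
      rw [Finset.mem_coe, Finset.mem_filter]
      exact ⟨fun h => ⟨mem_box_of_form_le_six (le_of_eq h), h⟩, fun h => h.2⟩
end

section
/- Let m ≥ 3 and let a_1,…,a_m ∈ ℤ with a_1 + ⋯ + a_m = 0. Define Φ : ℝ × ℝ^m → ℂ^m by Φ(θ,x) = (i e^{i a_1 θ} x_1, e^{i a_2 θ} x_2, …, e^{i a_m θ} x_m). For v ∈ ℝ^m write D_vΦ(θ,x) = (i e^{i a_1 θ} v_1, e^{i a_2 θ} v_2, …, e^{i a_m θ} v_m) for the derivative of Φ in the direction v of the x-variables, and ∂Φ/∂θ(θ,x) = (i a_1 · i e^{i a_1 θ} x_1, i a_2 e^{i a_2 θ} x_2, …, i a_m e^{i a_m θ} x_m). Then for all θ ∈ ℝ and all x, v, w ∈ ℝ^m with Σ_j a_j x_j v_j =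 0 and Σ_j a_j x_j w_j = 0, the standard symplectic form ω'(u,v) = Σ_{j=1}^m Im(conj(u_j)·v_j) satisfies ω'(∂Φ/∂θ(θ,x), D_vΦ(θ,x)) = 0 and ω'(D_vΦ(θ,x), D_wΦ(θ,x)) = 0. (Hence the quadrics L_c^{a_1,…,a_m} = Φ(ℝ × {x : Σ a_j x_j² = c}) are Lagrangian in ℂ^m.) -/
/-!
Each coordinate of a tangent vector is a unit complex number `p_j` (the phase `i e^{i a₁ θ}` or
`e^{i a_j θ}`) times a real number `v_j` for `D_vΦ`, or times `i a_j x_j` for `∂Φ/∂θ`. Since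
`conj p_j * p_j = 1`, the phases cancel in `conj u_j * v_j`: the products `v_j w_j` of the pair
`D_vΦ`, `D_wΦ` are real, and those of `∂Φ/∂θ`, `D_vΦ` are `-i a_j x_j v_j`, whose imaginary parts
sum to `-∑ a_j x_j v_j = 0`.
-/

open Complex

/-- Standard symplectic form `ω'(u,v) = ∑ Im(conj u_j · v_j)` on `ℂ^m`. -/
noncomputable def stdSymplectic (m : ℕ) (u v : Fin m → ℂ) : ℝ :=
  ∑ j, ((starRingEnd ℂ) (u j) * v j).im

/-- `Φ(θ,x) = (i e^{i a₁ θ} x₁, e^{i a₂ θ} x₂, …, e^{i a_m θ} x_m)`. -/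
noncomputable def quadricParam (m : ℕ) (a : Fin m → ℤ) (θ : ℝ) (x : Fin m → ℝ) :
    Fin m → ℂ :=
  fun j => (if (j : ℕ) = 0 then Complex.I else 1) *
    Complex.exp (Complex.I * (a j : ℂ) * (θ : ℂ)) * (x j : ℂ)

/-- The derivative of `Φ` in the direction `v` of the `x`-variables. -/
noncomputable def quadricParamDx (m : ℕ) (a : Fin m → ℤ) (θ : ℝ) (v : Fin m → ℝ) :
    Fin m → ℂ :=
  fun j => (if (j : ℕ) = 0 then Complex.I else 1) *
    Complex.exp (Complex.I * (a j : ℂ) * (θ : ℂ)) * (v j : ℂ)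

/-- The derivative of `Φ` in the `θ`-variable. -/
noncomputable def quadricParamDtheta (m : ℕ) (a : Fin m → ℤ) (θ : ℝ) (x : Fin m → ℝ) :
    Fin m → ℂ :=
  fun j => Complex.I * (a j : ℂ) * ((if (j : ℕ) = 0 then Complex.I else 1) *
    Complex.exp (Complex.I * (a j : ℂ) * (θ : ℂ)) * (x j : ℂ))

theorem conj_phase_mul_phase (n : ℕ) (k : ℤ) (θ : ℝ) :
    (starRingEnd ℂ) ((if n = 0 then Complex.I else 1) *
        Complex.exp (Complex.I * (k : ℂ) * (θ : ℂ))) *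
      ((if n = 0 then Complex.I else 1) * Complex.exp (Complex.I * (k : ℂ) * (θ : ℂ))) = 1 := by
  have h : ‖Complex.exp (Complex.I * (k : ℂ) * (θ : ℂ))‖ = 1 := by
    rw [Complex.norm_exp]
    simp
  rw [← Complex.normSq_eq_conj_mul_self, Complex.normSq_eq_norm_sq, norm_mul, h]
  split_ifs <;> simp

/-- The tangent vectors to the quadrics `L_c^{a₁,…,a_m}` are isotropic for the standard
symplectic form `ω'`: the quadrics are Lagrangian in `ℂ^m`. -/
theorem quadric_isotropic (m : ℕ) (hm : 3 ≤ m) (a : Fin m → ℤ)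
    (ha : (∑ j, a j) = 0) (θ : ℝ) (x v w : Fin m → ℝ)
    (hv : (∑ j, (a j : ℝ) * x j * v j) = 0)
    (hw : (∑ j, (a j : ℝ) * x j * w j) = 0) :
    stdSymplectic m (quadricParamDtheta m a θ x) (quadricParamDx m a θ v) = 0 ∧
    stdSymplectic m (quadricParamDx m a θ v) (quadricParamDx m a θ w) = 0 := by
  constructor
  · rw [← neg_eq_zero, ← hv, stdSymplectic, ← Finset.sum_neg_distrib]
    refine Finset.sum_congr rfl fun j _ => ?_
    have hp := conj_phase_mul_phase j (a j) θ
    simp only [quadricParamDtheta, quadricParamDx]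
    generalize (if (j : ℕ) = 0 then Complex.I else 1) *
      Complex.exp (Complex.I * (a j : ℂ) * (θ : ℂ)) = p at hp ⊢
    have key : (starRingEnd ℂ) (Complex.I * (a j : ℂ) * (p * (x j : ℂ))) * (p * (v j : ℂ)) =
        ((-(a j * x j * v j) : ℝ) : ℂ) * Complex.I := by
      simp only [map_mul, Complex.conj_I, Complex.conj_ofReal, map_intCast]
      push_cast
      linear_combination (-Complex.I * a j * x j * v j) * hp
    rw [key, Complex.im_ofReal_mul, Complex.I_im, mul_one, neg_neg]
  · refine Finset.sum_eq_zero fun j _ => ?_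
    have hp := conj_phase_mul_phase j (a j) θ
    simp only [quadricParamDx]
    generalize (if (j : ℕ) = 0 then Complex.I else 1) *
      Complex.exp (Complex.I * (a j : ℂ) * (θ : ℂ)) = p at hp ⊢
    have key : (starRingEnd ℂ) (p * (v j : ℂ)) * (p * (w j : ℂ)) = ((v j * w j : ℝ) : ℂ) := by
      simp only [map_mul, Complex.conj_ofReal]
      push_cast
      linear_combination ((v j : ℂ) * w j) * hp
    rw [key, Complex.ofReal_im]
end

section
/- Let m ≥ 3 and let a_1,…,a_m ∈ ℤ with a_1 + ⋯ + a_m = 0. Define Φ : ℝ × ℝ^m → ℂ^m by Φ(θ,x) = (i e^{i a_1 θ} x_1, e^{i a_2 θ} x_2, …, e^{i a_m θ} x_m), with ∂Φ/∂θ(θ,x) = (i a_1 · i e^{i a_1 θ} x_1, i a_2 e^{i a_2 θ} x_2, …, i a_m e^{i a_m θ} x_m) and D_vΦ(θ,x) = (i e^{i a_1 θ} v_1, e^{i a_2 θ} v_2, …, e^{i a_m θ} v_m) for v ∈ ℝ^m. Then for all θ ∈ ℝ, x ∈ ℝ^m and all v^{(2)},…,v^{(m)} ∈ ℝ^m, the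 complex number Ω'(∂Φ/∂θ(θ,x), D_{v^{(2)}}Φ(θ,x), …, D_{v^{(m)}}Φ(θ,x)) is real, where Ω'(u_1,…,u_m) denotes the determinant of the m×m complex matrix with columns u_1,…,u_m. (This is the condition Im Ω'|_L ≡ 0 making the quadrics L_c^{a_1,…,a_m} special Lagrangian.) -/
/-!
In the frame `(∂Φ/∂θ, D_{v⁽²⁾}Φ, …, D_{v⁽ᵐ⁾}Φ)` the `i`-th row of the matrix carries the common
factor `ε_i e^{i a_i θ}`, with `ε_1 = i` and `ε_j = 1` otherwise, and the first column carries the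
further factor `i`; what remains is a real matrix. As `∑ a_j = 0`, the exponentials multiply to
`1`, so the row factors multiply to `i` and `Ω' = i · i · (real determinant)` is real.
-/

open Complex

/-- Standard holomorphic volume form: the determinant of the matrix with columns
`u_1, …, u_m`. -/
noncomputable def stdHolVol (m : ℕ) (u : Fin m → Fin m → ℂ) : ℂ :=
  Matrix.det (Matrix.of fun i j => u j i)

/-- The holomorphic volume form `Ω'` is real on the tangent frame
`(∂Φ/∂θ, D_{v⁽²⁾}Φ, …, D_{v⁽ᵐ⁾}Φ)` of the quadrics `L_c^{a₁,…,a_m}`: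
this is the condition `Im Ω'|_L ≡ 0` making them special Lagrangian. -/
theorem quadric_special (m : ℕ) (hm : 3 ≤ m) (a : Fin m → ℤ)
    (ha : (∑ j, a j) = 0) (θ : ℝ) (x : Fin m → ℝ) (v : Fin (m - 1) → Fin m → ℝ) :
    (stdHolVol m (fun c : Fin m =>
      Fin.cases (quadricParamDtheta m a θ x)
        (fun k : Fin (m - 1) => quadricParamDx m a θ (v k))
        (c.cast (by omega)))).im = 0 := by
  obtain ⟨n, rfl⟩ : ∃ n, m = n + 1 := ⟨m - 1, by omega⟩
  set d : Fin (n + 1) → ℂ := fun j => (if (j : ℕ) = 0 then Complex.I else 1) *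
    Complex.exp (Complex.I * (a j : ℂ) * (θ : ℂ)) with hd
  set c : Fin (n + 1) → ℂ := fun j => if (j : ℕ) = 0 then Complex.I else 1 with hc
  -- The real matrix left after the row factors `d` and the column factors `c` are taken out.
  set R : Matrix (Fin (n + 1)) (Fin (n + 1)) ℝ :=
    Matrix.of fun i j => Fin.cases ((a i : ℝ) * x i) (fun k : Fin n => v k i) j with hR
  have hcprod : ∏ j, c j = Complex.I := by
    simp [hc]
  have hexp : ∏ j, Complex.exp (Complex.I * (a j : ℂ) * (θ : ℂ)) = 1 := by
    rw [← Complex.exp_sum, ← Finset.sum_mul, ← Finset.mul_sum, ← Int.cast_sum, ha]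
    simp
  have hdprod : ∏ j, d j = Complex.I := by
    rw [hd, Finset.prod_mul_distrib, hexp, mul_one]
    exact hcprod
  have hdet : (R.map Complex.ofRealHom).det = ((R.det : ℝ) : ℂ) :=
    (RingHom.map_det Complex.ofRealHom R).symm
  have key : stdHolVol (n + 1) (fun c : Fin (n + 1) =>
      Fin.cases (quadricParamDtheta (n + 1) a θ x)
        (fun k : Fin (n + 1 - 1) => quadricParamDx (n + 1) a θ (v k))
        (c.cast (by omega))) = Complex.I * (Complex.I * ((R.det : ℝ) : ℂ)) := by
    rw [← hdet]
    nth_rewrite 1 [← hdprod]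
    rw [← hcprod, ← Matrix.det_mul_row, ← Matrix.det_mul_column]
    unfold stdHolVol
    congr 1
    ext i j
    refine Fin.cases ?_ (fun k => ?_) j
    · simp [hd, hc, hR, quadricParamDtheta]
      ring_nf
    · simp [hd, hc, hR, quadricParamDx]
  rw [key, ← mul_assoc, Complex.I_mul_I]
  simp
end

section
/- Let m > 2 and a_1,…,a_m > 0, and define p(x) = (1+a_1x²)⋯(1+a_mx²) − 1. Then ∫_0^{∞} p'(x) / ((p(x)+1)·√(p(x))) dx = π. (This follows by the substitution w = √(p(x)), which transforms the integral into 2∫_0^{∞} dw/(w²+1) = π.) -/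
/-!
The integrand is the derivative on `(0, ∞)` of `x ↦ 2 arctan √(p x)`, which encodes the
substitution `w = √(p x)`. Since `p 0 = 0` and `p x ≥ aᵢ x²` (any single factor of the product
bounds it from below), this primitive is continuous at `0` with value `0` and tends to
`2 · π/2 = π` at infinity. The integrand is nonnegative because `p' ≥ 0` on `(0, ∞)`, so
integrability comes for free and the fundamental theorem of calculus on a half-line applies.
-/

open MeasureTheory

/-- `p(x) = (1+a₁x²)⋯(1+a_mx²) − 1` from Lawlor's construction. -/
def lawlorP (m : ℕ) (a : Fin m → ℝ) (x : ℝ) : ℝ :=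
  (∏ i, (1 + a i * x ^ 2)) - 1

lemma lawlorP_ge {m : ℕ} {a : Fin m → ℝ} (ha : ∀ i, 0 < a i) (i : Fin m) (x : ℝ) :
    a i * x ^ 2 ≤ lawlorP m a x := by
  have h : ∏ j, (if j = i then 1 + a j * x ^ 2 else 1) ≤ ∏ j, (1 + a j * x ^ 2) := by
    refine Finset.prod_le_prod (fun j _ => ?_) (fun j _ => ?_)
    · have := mul_nonneg (ha j).le (sq_nonneg x)
      split_ifs <;> linarith
    · have := mul_nonneg (ha j).le (sq_nonneg x)
      split_ifs <;> linarith
  rw [Finset.prod_ite_eq' Finset.univ i, if_pos (Finset.mem_univ i)] at h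
  unfold lawlorP
  linarith

lemma lawlorP_hasDerivAt (m : ℕ) (a : Fin m → ℝ) (x : ℝ) :
    HasDerivAt (lawlorP m a)
      (∑ i, (∏ j ∈ Finset.univ.erase i, (1 + a j * x ^ 2)) * (a i * (2 * x))) x := by
  have h : ∀ i ∈ (Finset.univ : Finset (Fin m)),
      HasDerivAt (fun y : ℝ => 1 + a i * y ^ 2) (a i * (2 * x)) x := fun i _ => by
    simpa using ((hasDerivAt_pow 2 x).const_mul (a i)).const_add 1
  exact (HasDerivAt.fun_finsetProd h).sub_const 1

lemma lawlorP_deriv_nonneg {m : ℕ} {a : Fin m → ℝ} (ha : ∀ i, 0 < a i) {x : ℝ} (hx : 0 < x) :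
    0 ≤ deriv (lawlorP m a) x := by
  rw [(lawlorP_hasDerivAt m a x).deriv]
  refine Finset.sum_nonneg fun i _ => mul_nonneg (Finset.prod_nonneg fun j _ => ?_) ?_
  · have := ha j
    positivity
  · have := ha i
    positivity

/-- The key integral identity in Lawlor's construction:
`∫₀^∞ p'(x)/((p(x)+1)√(p(x))) dx = π`, via the substitution `w = √(p(x))`. -/
theorem lawlor_integral_pi (m : ℕ) (hm : 2 < m) (a : Fin m → ℝ)
    (ha : ∀ i, 0 < a i) :
    ∫ x in Set.Ioi (0 : ℝ),
      deriv (lawlorP m a) x / ((lawlorP m a x + 1) * Real.sqrt (lawlorP m a x))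
      = Real.pi := by
  let i : Fin m := ⟨0, by omega⟩
  have hdiff : ∀ x, HasDerivAt (lawlorP m a) (deriv (lawlorP m a) x) x := fun x =>
    (lawlorP_hasDerivAt m a x).differentiableAt.hasDerivAt
  have hpos : ∀ x : ℝ, 0 < x → 0 < lawlorP m a x := fun x hx =>
    (mul_pos (ha i) (pow_pos hx 2)).trans_le (lawlorP_ge ha i x)
  have hcont : Continuous (lawlorP m a) :=
    continuous_iff_continuousAt.2 fun x => (hdiff x).continuousAt
  have htop : Filter.Tendsto (lawlorP m a) Filter.atTop Filter.atTop :=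
    Filter.tendsto_atTop_mono (lawlorP_ge ha i)
      ((Filter.tendsto_pow_atTop two_ne_zero).const_mul_atTop (ha i))
  have hlim : Filter.Tendsto (fun x => 2 * Real.arctan (Real.sqrt (lawlorP m a x)))
      Filter.atTop (nhds (2 * (Real.pi / 2))) :=
    ((Real.tendsto_arctan_atTop.mono_right nhdsWithin_le_nhds).comp
      (Real.tendsto_sqrt_atTop.comp htop)).const_mul 2
  rw [integral_Ioi_of_hasDerivAt_of_nonneg
    (g := fun x => 2 * Real.arctan (Real.sqrt (lawlorP m a x))) _ _ _ hlim]
  · simp [lawlorP]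
    ring
  · exact (continuous_const.mul (Real.continuous_arctan.comp
      (Real.continuous_sqrt.comp hcont))).continuousWithinAt
  · intro x hx
    have hp := hpos x hx
    have hs := Real.sqrt_pos.2 hp
    refine ((((hdiff x).sqrt hp.ne').arctan).const_mul 2).congr_deriv ?_
    rw [Real.sq_sqrt hp.le]
    field_simp
    ring
  · intro x hx
    have hp := hpos x hx
    exact div_nonneg (lawlorP_deriv_nonneg ha hx) (by positivity)
end

section
/- Let m > 2 and a_1,…,a_m > 0. Define p(x) = (1+a_1x²)⋯(1+a_mx²) − 1, P(x) = p(x)/x² for x ≠ 0 with P(0) = a_1+⋯+a_m, and φ_k = a_k ∫_{−∞}^{∞} dx / ((1+a_kx²)√(P(x))) for k = 1,…,m. Then φ_1 + φ_2 + ⋯ + φ_m = π. -/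
/-!
On `(0, ∞)` one has `√(P x) = √(p x) / x`, so the logarithmic derivative of `∏ (1 + aᵢ x²) = 1 + p`
shows that the sum of the integrands `aₖ / ((1 + aₖ x²) √(P x))` is exactly the derivative of
`arctan √(p x)` (`hasDerivAt_arctan_sqrt_lawlorP`). This function increases from `0` at `x = 0` to
`π / 2` at infinity, so the sum integrates to `π / 2` over the half-line; each single integrand is
nonnegative and dominated by the sum, hence integrable. As the integrands are even, the integral
over the whole line is twice that, namely `π`.
-/

open MeasureTheory

/-- `P(x) = p(x)/x²` for `x ≠ 0`, extended by `P(0) = a₁ + ⋯ + a_m`. -/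
noncomputable def lawlorPP (m : ℕ) (a : Fin m → ℝ) (x : ℝ) : ℝ :=
  if x = 0 then ∑ i, a i else lawlorP m a x / x ^ 2

/-- The angles `φ_k = a_k ∫_{−∞}^{∞} dx/((1+a_kx²)√(P(x)))` of Lawlor's construction. -/
noncomputable def lawlorAngle (m : ℕ) (a : Fin m → ℝ) (k : Fin m) : ℝ :=
  a k * ∫ x : ℝ, 1 / ((1 + a k * x ^ 2) * Real.sqrt (lawlorPP m a x))

lemma one_le_lawlor_prod (m : ℕ) (a : Fin m → ℝ) (ha : ∀ i, 0 < a i) (k : Fin m) (x : ℝ) :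
    1 + a k * x ^ 2 ≤ ∏ i, (1 + a i * x ^ 2) := by
  have h1 : ∀ i, 1 ≤ 1 + a i * x ^ 2 := fun i => by
    have := ha i
    have : 0 ≤ a i * x ^ 2 := by positivity
    linarith
  rw [← Finset.mul_prod_erase Finset.univ _ (Finset.mem_univ k)]
  refine le_mul_of_one_le_right (by linarith [h1 k]) ?_
  exact Finset.prod_induction _ (fun y => 1 ≤ y)
    (fun _ _ => one_le_mul_of_one_le_of_one_le) le_rfl fun i _ => h1 i

lemma mul_sq_le_lawlorP (m : ℕ) (a : Fin m → ℝ) (ha : ∀ i, 0 < a i) (k : Fin m) (x : ℝ) :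
    a k * x ^ 2 ≤ lawlorP m a x := by
  have := one_le_lawlor_prod m a ha k x
  unfold lawlorP
  linarith

lemma continuous_lawlorP (m : ℕ) (a : Fin m → ℝ) : Continuous (lawlorP m a) := by
  unfold lawlorP
  fun_prop

lemma hasDerivAt_lawlorP (m : ℕ) (a : Fin m → ℝ) (ha : ∀ i, 0 < a i) (x : ℝ) :
    HasDerivAt (lawlorP m a)
      ((1 + lawlorP m a x) * ∑ k, 2 * a k * x / (1 + a k * x ^ 2)) x := by
  have h : ∀ i ∈ Finset.univ, HasDerivAt (fun y : ℝ => 1 + a i * y ^ 2) (2 * a i * x) x := by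
    intro i _
    have := ((hasDerivAt_pow 2 x).const_mul (a i)).const_add 1
    exact this.congr_deriv (by push_cast; ring)
  have h2 := (HasDerivAt.fun_finsetProd h).sub_const 1
  unfold lawlorP
  refine h2.congr_deriv (Eq.symm ?_)
  rw [add_sub_cancel, Finset.mul_sum]
  refine Finset.sum_congr rfl fun k _ => ?_
  have := ha k
  have hne : (1 + a k * x ^ 2) ≠ 0 := by positivity
  rw [← Finset.mul_prod_erase Finset.univ _ (Finset.mem_univ k), smul_eq_mul]
  field_simp

lemma sqrt_lawlorPP (m : ℕ) (a : Fin m → ℝ) {x : ℝ} (hx : 0 < x) :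
    √(lawlorPP m a x) = √(lawlorP m a x) / x := by
  rw [lawlorPP, if_neg hx.ne', Real.sqrt_div' _ (sq_nonneg x), Real.sqrt_sq hx.le]

lemma hasDerivAt_arctan_sqrt_lawlorP (m : ℕ) (k₀ : Fin m) (a : Fin m → ℝ) (ha : ∀ i, 0 < a i)
    {x : ℝ} (hx : 0 < x) :
    HasDerivAt (fun y => Real.arctan √(lawlorP m a y))
      (∑ k, a k * (1 / ((1 + a k * x ^ 2) * √(lawlorPP m a x)))) x := by
  have hp : 0 < lawlorP m a x :=
    lt_of_lt_of_le (mul_pos (ha k₀) (pow_pos hx 2)) (mul_sq_le_lawlorP m a ha k₀ x)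
  have h := ((hasDerivAt_lawlorP m a ha x).sqrt hp.ne').arctan
  convert h using 1
  rw [Real.sq_sqrt hp.le, sqrt_lawlorPP m a hx]
  have hs : 0 < √(lawlorP m a x) := Real.sqrt_pos.2 hp
  rw [Finset.mul_sum, Finset.sum_div, Finset.mul_sum]
  refine Finset.sum_congr rfl fun k _ => ?_
  have := ha k
  have hne : (1 + a k * x ^ 2) ≠ 0 := by positivity
  have hne' : 1 + lawlorP m a x ≠ 0 := by positivity
  field_simp

lemma lawlorAngle_eq (m : ℕ) (a : Fin m → ℝ) (k : Fin m) :
    lawlorAngle m a k =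
      2 * ∫ x in Set.Ioi (0 : ℝ), a k * (1 / ((1 + a k * x ^ 2) * √(lawlorPP m a x))) := by
  rw [← integral_comp_abs
    (f := fun x => a k * (1 / ((1 + a k * x ^ 2) * √(lawlorPP m a x)))), lawlorAngle,
    ← integral_const_mul]
  simp [lawlorPP, lawlorP]

lemma measurable_lawlorPP (m : ℕ) (a : Fin m → ℝ) : Measurable (lawlorPP m a) := by
  unfold lawlorPP
  refine Measurable.ite (measurableSet_singleton 0) measurable_const ?_
  exact (continuous_lawlorP m a).measurable.div (by fun_prop)

/-- The angles in Lawlor's construction sum to `π`: `φ₁ + ⋯ + φ_m = π`. -/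
theorem lawlor_angles_sum (m : ℕ) (hm : 2 < m) (a : Fin m → ℝ)
    (ha : ∀ i, 0 < a i) :
    (∑ k, lawlorAngle m a k) = Real.pi := by
  let k₀ : Fin m := ⟨0, by omega⟩
  have hnn : ∀ k x, 0 ≤ a k * (1 / ((1 + a k * x ^ 2) * √(lawlorPP m a x))) := by
    intro k x
    have := ha k
    positivity
  have hcont : ContinuousWithinAt (fun y => Real.arctan √(lawlorP m a y)) (Set.Ici 0) 0 :=
    (Real.continuous_arctan.comp
      (Real.continuous_sqrt.comp (continuous_lawlorP m a))).continuousWithinAt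
  have hp : Filter.Tendsto (lawlorP m a) Filter.atTop Filter.atTop :=
    Filter.tendsto_atTop_mono (mul_sq_le_lawlorP m a ha k₀)
      ((Filter.tendsto_pow_atTop two_ne_zero).const_mul_atTop (ha k₀))
  have hlim : Filter.Tendsto (fun y => Real.arctan √(lawlorP m a y)) Filter.atTop
      (nhds (Real.pi / 2)) :=
    (Real.tendsto_arctan_atTop.mono_right nhdsWithin_le_nhds).comp
      (Real.tendsto_sqrt_atTop.comp hp)
  have hderiv := fun x (hx : x ∈ Set.Ioi (0 : ℝ)) =>
    hasDerivAt_arctan_sqrt_lawlorP m k₀ a ha hx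
  have hint := integrableOn_Ioi_deriv_of_nonneg hcont hderiv
    (fun x _ => Finset.sum_nonneg fun k _ => hnn k x) hlim
  have hval := integral_Ioi_of_hasDerivAt_of_tendsto hcont hderiv hint hlim
  have hintk : ∀ k ∈ Finset.univ, IntegrableOn
      (fun x => a k * (1 / ((1 + a k * x ^ 2) * √(lawlorPP m a x)))) (Set.Ioi 0) := by
    intro k _
    refine Integrable.mono' hint ?_ (Filter.Eventually.of_forall fun x => ?_)
    · have := measurable_lawlorPP m a
      exact Measurable.aestronglyMeasurable (by fun_prop)
    · rw [Real.norm_of_nonneg (hnn k x)]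
      exact Finset.single_le_sum (f := fun k => a k * (1 / ((1 + a k * x ^ 2) * √(lawlorPP m a x))))
        (fun i _ => hnn i x) (Finset.mem_univ k)
  simp_rw [lawlorAngle_eq]
  rw [← Finset.mul_sum, ← integral_finsetSum _ hintk, hval]
  simp [lawlorP]
  ring
end

section
/- Let m > 2 and a_1,…,a_m > 0. Define p(x) = (1+a_1x²)⋯(1+a_mx²) − 1, P(x) = p(x)/x² for x ≠ 0 with P(0) = a_1+⋯+a_m, and for k = 1,…,m define ψ_k(y) = a_k ∫_{−∞}^{y} dx / ((1+a_kx²)√(P(x))) and z_k(y) = e^{iψ_k(y)}·√(a_k^{−1} + y²). Then each z_k is differentiable and for every y ∈ ℝ and every k = 1,…,m, Im(conj(z_k'(y))·z_k(y)) = −1/√(P(y)); in particular this quantity is the same for all k. -/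
/-!
Writing `z_k = e^{iψ} r` with `ψ`, `r` real, the product rule gives
`z_k' = e^{iψ} (iψ' r + r')`, and since `|e^{iψ}| = 1`,
`Im (conj z_k' · z_k) = -ψ' r²`. Substituting `ψ' = a_k / ((1 + a_k y²) √P)` and
`r² = a_k⁻¹ + y²` leaves `-1/√P`.

The analytic content is that `ψ` has this derivative. Induction on the number of factors
(`exists_quotient`) shows that `P` is continuous and bounded below by `a_1 + ⋯ + a_m > 0`. Hence the
integrand is continuous and dominated by a multiple of `1/(1 + a_k x²)`, so it is integrable on `ℝ`,
and the fundamental theorem of calculus applies.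
-/

open MeasureTheory Complex

/-- `ψ_k(y) = a_k ∫_{−∞}^{y} dx/((1+a_kx²)√(P(x)))`. -/
noncomputable def lawlorPsi (m : ℕ) (a : Fin m → ℝ) (k : Fin m) (y : ℝ) : ℝ :=
  a k * ∫ x in Set.Iic y, 1 / ((1 + a k * x ^ 2) * Real.sqrt (lawlorPP m a x))

/-- `z_k(y) = e^{iψ_k(y)} √(a_k⁻¹ + y²)`. -/
noncomputable def lawlorZ (m : ℕ) (a : Fin m → ℝ) (k : Fin m) (y : ℝ) : ℂ :=
  Complex.exp (Complex.I * (lawlorPsi m a k y : ℂ)) *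
    (Real.sqrt ((a k)⁻¹ + y ^ 2) : ℝ)

/-- The polynomial `∏ (1 + aᵢx²) - 1` is `x²` times a continuous function `Q`, with `Q(0) = ∑ aᵢ` and
`Q ≥ ∑ aᵢ`. The induction step is `Q ↦ Q + a + a x² Q`. -/
lemma exists_quotient {ι : Type*} (s : Finset ι) (a : ι → ℝ) (ha : ∀ i, 0 < a i) :
    ∃ Q : ℝ → ℝ, Continuous Q ∧ Q 0 = ∑ i ∈ s, a i ∧ (∀ x, ∑ i ∈ s, a i ≤ Q x) ∧
      ∀ x, ∏ i ∈ s, (1 + a i * x ^ 2) = 1 + x ^ 2 * Q x := by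
  classical
  induction s using Finset.induction_on with
  | empty => exact ⟨fun _ => 0, continuous_const, by simp, by simp, by simp⟩
  | insert j s hj ih =>
    obtain ⟨Q, hQ, hQ0, hQle, hQp⟩ := ih
    refine ⟨fun x => a j + Q x + a j * x ^ 2 * Q x, by fun_prop, ?_, ?_, ?_⟩
    · simp [Finset.sum_insert hj, hQ0]
    · intro x
      rw [Finset.sum_insert hj]
      have h0 : 0 ≤ Q x := (Finset.sum_nonneg fun i _ => (ha i).le).trans (hQle x)
      have h1 : 0 ≤ a j * x ^ 2 * Q x := mul_nonneg (mul_nonneg (ha j).le (sq_nonneg x)) h0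
      linarith [hQle x]
    · intro x
      rw [Finset.prod_insert hj, hQp]
      ring

lemma lawlorPP_continuous_and_le (m : ℕ) (a : Fin m → ℝ) (ha : ∀ i, 0 < a i) :
    Continuous (lawlorPP m a) ∧ ∀ x, ∑ i, a i ≤ lawlorPP m a x := by
  obtain ⟨Q, hQ, hQ0, hQle, hQp⟩ := exists_quotient Finset.univ a ha
  have h : lawlorPP m a = Q := by
    funext x
    unfold lawlorPP lawlorP
    split_ifs with hx
    · rw [hx, hQ0]
    · rw [hQp]
      field_simp
      ring
  rw [h]
  exact ⟨hQ, hQle⟩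

lemma lawlorPP_pos (m : ℕ) (a : Fin m → ℝ) (ha : ∀ i, 0 < a i) (k : Fin m) (x : ℝ) :
    0 < lawlorPP m a x :=
  (Finset.sum_pos (fun i _ => ha i) ⟨k, Finset.mem_univ k⟩).trans_le
    ((lawlorPP_continuous_and_le m a ha).2 x)

lemma integrand_continuous (m : ℕ) (a : Fin m → ℝ) (ha : ∀ i, 0 < a i) (k : Fin m) :
    Continuous fun x : ℝ => 1 / ((1 + a k * x ^ 2) * Real.sqrt (lawlorPP m a x)) := by
  have hc := (lawlorPP_continuous_and_le m a ha).1
  refine continuous_const.div (by fun_prop) fun x => ?_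
  have h1 := Real.sqrt_pos.2 (lawlorPP_pos m a ha k x)
  have h2 := ha k
  positivity

lemma integrand_integrable (m : ℕ) (a : Fin m → ℝ) (ha : ∀ i, 0 < a i) (k : Fin m) :
    Integrable fun x : ℝ => 1 / ((1 + a k * x ^ 2) * Real.sqrt (lawlorPP m a x)) := by
  have hk := ha k
  have hS : 0 < ∑ i, a i := Finset.sum_pos (fun i _ => ha i) ⟨k, Finset.mem_univ k⟩
  have hg : Integrable fun x : ℝ => (1 + a k * x ^ 2)⁻¹ * (Real.sqrt (∑ i, a i))⁻¹ := by
    have h := (integrable_inv_one_add_sq.comp_mul_left' (Real.sqrt_pos.2 hk).ne').mul_const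
      (Real.sqrt (∑ i, a i))⁻¹
    simpa only [mul_pow, Real.sq_sqrt hk.le] using h
  refine hg.mono' (integrand_continuous m a ha k).aestronglyMeasurable (.of_forall fun x => ?_)
  have hle := Real.sqrt_le_sqrt ((lawlorPP_continuous_and_le m a ha).2 x)
  have hs := Real.sqrt_pos.2 hS
  rw [Real.norm_of_nonneg (by positivity), one_div, mul_inv]
  gcongr

lemma lawlorPsi_hasDerivAt (m : ℕ) (a : Fin m → ℝ) (ha : ∀ i, 0 < a i) (k : Fin m) (y : ℝ) :
    HasDerivAt (lawlorPsi m a k)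
      (a k * (1 / ((1 + a k * y ^ 2) * Real.sqrt (lawlorPP m a y)))) y := by
  have hi := integrand_integrable m a ha k
  have hd := (((integrand_continuous m a ha k).integral_hasStrictDerivAt 0 y).hasDerivAt.const_add
    (∫ x in Set.Iic 0, 1 / ((1 + a k * x ^ 2) * Real.sqrt (lawlorPP m a x)))).const_mul (a k)
  refine hd.congr_of_eventuallyEq (.of_forall fun u => ?_)
  simp only [lawlorPsi]
  rw [← intervalIntegral.integral_Iic_sub_Iic hi.integrableOn hi.integrableOn]
  ring

/-- Each `z_k` is differentiable and `Im(conj(z_k'(y)) z_k(y)) = −1/√(P(y))`;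
in particular this quantity is independent of `k`. -/
theorem lawlorZ_differentiable_and_im (m : ℕ) (hm : 2 < m) (a : Fin m → ℝ)
    (ha : ∀ i, 0 < a i) :
    ∀ k : Fin m, Differentiable ℝ (lawlorZ m a k) ∧
      ∀ y : ℝ, ((starRingEnd ℂ) (deriv (lawlorZ m a k) y) * lawlorZ m a k y).im =
        -1 / Real.sqrt (lawlorPP m a y) := by
  intro k
  have hk := ha k
  have hpos : ∀ y : ℝ, 0 < (a k)⁻¹ + y ^ 2 := fun y => by positivity
  have hz : ∀ y : ℝ, ∃ dψ dr : ℝ,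
      dψ = a k * (1 / ((1 + a k * y ^ 2) * Real.sqrt (lawlorPP m a y))) ∧
      HasDerivAt (lawlorZ m a k)
        (Complex.exp (I * (lawlorPsi m a k y : ℂ)) * (I * (dψ : ℂ)) *
            (Real.sqrt ((a k)⁻¹ + y ^ 2) : ℝ) +
          Complex.exp (I * (lawlorPsi m a k y : ℂ)) * (dr : ℂ)) y := by
    intro y
    have hr : DifferentiableAt ℝ (fun y : ℝ => Real.sqrt ((a k)⁻¹ + y ^ 2)) y :=
      DifferentiableAt.sqrt (by fun_prop) (hpos y).ne'
    exact ⟨_, _, rfl, (((lawlorPsi_hasDerivAt m a ha k y).ofReal_comp.const_mul I).cexp).mul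
      hr.hasDerivAt.ofReal_comp⟩
  refine ⟨fun y => ?_, fun y => ?_⟩
  · obtain ⟨dψ, dr, -, h⟩ := hz y
    exact h.differentiableAt
  · obtain ⟨dψ, dr, hψ, h⟩ := hz y
    rw [h.deriv, lawlorZ]
    have hs := Real.sqrt_pos.2 (lawlorPP_pos m a ha k y)
    have hr := Real.sq_sqrt (hpos y).le
    set r := Real.sqrt ((a k)⁻¹ + y ^ 2)
    set E := Complex.exp (I * (lawlorPsi m a k y : ℂ)) with hE
    have hEE : (starRingEnd ℂ) E * E = 1 := by
      rw [hE, ← Complex.exp_conj, ← Complex.exp_add]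
      simp
    have key : (starRingEnd ℂ) (E * (I * (dψ : ℂ)) * (r : ℂ) + E * (dr : ℂ)) * (E * (r : ℂ)) =
        ((dr * r : ℝ) : ℂ) + ((-(dψ * r ^ 2) : ℝ) : ℂ) * I := by
      simp only [map_add, map_mul, Complex.conj_I, Complex.conj_ofReal]
      push_cast
      linear_combination ((dr : ℂ) * r - I * dψ * r ^ 2) * hEE
    have him : ∀ u v : ℝ, ((u : ℂ) + (v : ℂ) * I).im = v := fun u v => by simp
    rw [key, him, hr, hψ]
    have h1 : 1 + a k * y ^ 2 ≠ 0 := by positivity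
    field_simp
end
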